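/- Fix k with 2 ≤ k ≤ q^t and set d = Σ_{C ∈ Ξ_k^*} |C|. Fix any r ∈ ℕ and let I = {ω^r, ω^{r+1}, …, ω^{r+d−1}}. Then the elements ω^r, …, ω^{r+d−1} are pairwise distinct (so |I| = d), and there exist coefficients M(j,β) ∈ B (for 0 ≤ j ≤ d−1 and β ∈ F \ ({0} ∪ I)) such that for every f ∈ F[X] with deg f < k and every j ∈ {0,…,d−1}: Tr(f(ω^{r+j})/ω^{r+j}) = Σ_{β ∈ F \ ({0} ∪ I)} M(j,β) · Tr(f(β)/β). -/

import Mathlib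

/-- The cyclotomic coset of `i` modulo `q^t - 1` (with respect to `q`):
the orbit `{i * q^j mod (q^t - 1) : j ≥ 0}`. -/
def cycCoset (q t i : ℕ) : Set ℕ := {b : ℕ | ∃ j : ℕ, b = i * q ^ j % (q ^ t - 1)}

/-- `Ξ_k^*`: the collection of cyclotomic cosets modulo `q^t - 1` all of whose
elements lie in `{2, 3, …, q^t - k}`. -/
def XiStar (q t k : ℕ) : Set (Set ℕ) :=
  {C : Set ℕ | (∃ i : ℕ, i ≤ q ^ t - 2 ∧ C = cycCoset q t i) ∧ C ⊆ Set.Icc 2 (q ^ t - k)}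

open Polynomial in
lemma aux_mem_range {B F : Type} [Field B] [Fintype B] [Field F] [Algebra B F] (x : F)
    (hx : x ^ Fintype.card B = x) : ∃ b : B, algebraMap B F b = x := by
  classical
  by_contra hcon
  push Not at hcon
  have h1 : 1 < Fintype.card B := Fintype.one_lt_card
  have hne := FiniteField.X_pow_card_sub_X_ne_zero F h1
  have hsub : insert x (Finset.univ.image (algebraMap B F)) ⊆
      (X ^ Fintype.card B - X : F[X]).roots.toFinset := by
    intro y hy
    rw [Multiset.mem_toFinset, mem_roots hne]
    rw [Finset.mem_insert, Finset.mem_image] at hy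
    rcases hy with rfl | ⟨b, -, rfl⟩
    · simp [hx]
    · simp [← map_pow, FiniteField.pow_card]
  have h2 := Finset.card_le_card hsub
  rw [Finset.card_insert_of_notMem (by simpa using hcon),
    Finset.card_image_of_injective _ (algebraMap B F).injective, Finset.card_univ] at h2
  have h3 := (Multiset.toFinset_card_le (X ^ Fintype.card B - X : F[X]).roots).trans
    (card_roots' _)
  rw [FiniteField.X_pow_card_sub_X_natDegree_eq F h1] at h3
  omega

lemma aux_bij {F : Type} [Field F] (d r : ℕ) (e : Fin d → ℕ) (ω : F) (h0 : ω ≠ 0)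
    (hinj : Function.Injective fun s => ω ^ e s) :
    Function.Bijective
      (fun (a : Fin d → F) (i : Fin d) => ∑ s, a s * (ω ^ (r + (i : ℕ))) ^ e s) := by
  let A : Matrix (Fin d) (Fin d) F :=
    Matrix.diagonal (fun s => ω ^ (r * e s)) * Matrix.vandermonde (fun s => ω ^ e s)
  have hA : IsUnit A := by
    rw [Matrix.isUnit_iff_isUnit_det, isUnit_iff_ne_zero, Matrix.det_mul, Matrix.det_diagonal]
    refine mul_ne_zero (Finset.prod_ne_zero_iff.2 fun s _ => pow_ne_zero _ h0) ?_
    exact Matrix.det_vandermonde_ne_zero_iff.2 hinj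
  have hEq : (fun (a : Fin d → F) (i : Fin d) => ∑ s, a s * (ω ^ (r + (i : ℕ))) ^ e s)
      = A.vecMul := by
    funext a i
    simp only [Matrix.vecMul, dotProduct, A, Matrix.diagonal_mul, Matrix.vandermonde_apply]
    refine Finset.sum_congr rfl fun s _ => ?_
    congr 1
    rw [← pow_mul, ← pow_mul, ← pow_add]
    congr 1
    ring
  rw [hEq]
  exact ⟨Matrix.vecMul_injective_iff_isUnit.2 hA, Matrix.vecMul_surjective_iff_isUnit.2 hA⟩

lemma aux_order {F : Type} [Field F] [Fintype F] (ω : F) (h3 : 3 ≤ Fintype.card F)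
    (hω : ∀ x : F, x ≠ 0 → ∃ j : ℕ, x = ω ^ j) :
    ω ≠ 0 ∧ orderOf ω = Fintype.card F - 1 := by
  classical
  have h0 : ω ≠ 0 := by
    rintro rfl
    have : (Finset.univ : Finset F) ⊆ {0, 1} := by
      intro x _
      by_cases hx : x = 0
      · simp [hx]
      · obtain ⟨j, rfl⟩ := hω x hx
        rcases Nat.eq_zero_or_pos j with rfl | hj
        · simp
        · simp [hj.ne']
    have := (Finset.card_le_card this).trans Finset.card_le_two
    rw [Finset.card_univ] at this
    omega
  refine ⟨h0, ?_⟩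
  have h := orderOf_eq_card_of_forall_mem_zpowers (g := Units.mk0 ω h0) (by
    intro x
    obtain ⟨j, hj⟩ := hω x x.ne_zero
    exact ⟨j, by ext; simp [hj]⟩)
  rw [← orderOf_units, Units.val_mk0, Nat.card_eq_fintype_card, Fintype.card_units] at h
  exact h

lemma aux_sum_zero {F : Type} [Field F] [Fintype F] (k d : ℕ) (hk2 : 2 ≤ k)
    (hk : k ≤ Fintype.card F)
    (e : Fin d → ℕ) (h2 : ∀ s, 2 ≤ e s) (h3 : ∀ s, e s ≤ Fintype.card F - k)
    (a : Fin d → F) (f : Polynomial F) (hf : f.degree < (k : WithBot ℕ)) :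
    ∑ x : F, (∑ s, a s * x ^ e s) * (f.eval x / x) = 0 := by
  have hn : f.natDegree < k := by
    by_cases h : f = 0
    · subst h; simp; omega
    · exact (Polynomial.natDegree_lt_iff_degree_lt h).2 hf
  have key : ∀ x : F, (∑ s, a s * x ^ e s) * (f.eval x / x) =
      ∑ s, ∑ i ∈ Finset.range k, a s * f.coeff i * x ^ (e s - 1 + i) := by
    intro x
    rw [Polynomial.eval_eq_sum_range' hn, Finset.sum_mul]
    refine Finset.sum_congr rfl fun s _ => ?_
    rw [Finset.sum_div, Finset.mul_sum]
    refine Finset.sum_congr rfl fun i _ => ?_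
    obtain ⟨m, hm⟩ : ∃ m, e s = m + 1 + 1 := ⟨e s - 2, by have := h2 s; omega⟩
    rw [hm, Nat.add_sub_cancel]
    by_cases hx : x = 0
    · subst hx; simp
    · field_simp
      ring
  simp_rw [key]
  rw [Finset.sum_comm]
  refine Finset.sum_eq_zero fun s _ => ?_
  rw [Finset.sum_comm]
  refine Finset.sum_eq_zero fun i hi => ?_
  rw [← Finset.mul_sum, FiniteField.sum_pow_lt_card_sub_one, mul_zero]
  have := h2 s
  have := h3 s
  have := Finset.mem_range.1 hi
  omega

lemma aux_core (k d r : ℕ) (hk2 : 2 ≤ k)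
    (B F : Type) [Field B] [Fintype B] [Field F] [Fintype F] [DecidableEq F] [Algebra B F]
    (hk : k ≤ Fintype.card F)
    (ω : F) (hω : ∀ x : F, x ≠ 0 → ∃ j : ℕ, x = ω ^ j)
    (e : Fin d → ℕ) (he : Function.Injective e) (h2 : ∀ s, 2 ≤ e s)
    (h3 : ∀ s, e s ≤ Fintype.card F - k)
    (hσ : ∀ s, ∃ s', e s' = e s * Fintype.card B % (Fintype.card F - 1)) :
    (∀ j₁ : ℕ, j₁ < d → ∀ j₂ : ℕ, j₂ < d → ω ^ (r + j₁) = ω ^ (r + j₂) → j₁ = j₂) ∧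
    ∃ M : ℕ → F → B,
      ∀ f : Polynomial F, f.degree < (k : WithBot ℕ) →
        ∀ j : ℕ, j < d →
          Algebra.trace B F (f.eval (ω ^ (r + j)) / ω ^ (r + j)) =
            ∑ β ∈ Finset.univ \
                insert (0 : F) ((Finset.range d).image fun j' => ω ^ (r + j')),
              M j β * Algebra.trace B F (f.eval β / β) := by
  rcases Nat.eq_zero_or_pos d with hd0 | hd
  · subst hd0
    exact ⟨fun _ h => absurd h (Nat.not_lt_zero _), fun _ _ => 0,
      fun _ _ _ h => absurd h (Nat.not_lt_zero _)⟩
  have hcard : 4 ≤ Fintype.card F := by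
    have := h2 ⟨0, hd⟩
    have := h3 ⟨0, hd⟩
    omega
  obtain ⟨h0, hord⟩ := aux_order ω (by omega) hω
  have hpinj : Set.InjOn (ω ^ ·) (Set.Iio (Fintype.card F - 1)) := by
    rw [← hord]; exact pow_injOn_Iio_orderOf
  have helt : ∀ s, e s < Fintype.card F - 1 := fun s => by have := h3 s; omega
  have hdn : d ≤ Fintype.card F - 1 := by
    have := Finset.card_le_card_of_injOn (s := (Finset.univ : Finset (Fin d)))
      (t := Finset.range (Fintype.card F - 1)) e (fun s _ => by simpa using helt s) he.injOn
    simpa using this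
  have hdist : ∀ j₁ : ℕ, j₁ < d → ∀ j₂ : ℕ, j₂ < d →
      ω ^ (r + j₁) = ω ^ (r + j₂) → j₁ = j₂ := by
    intro j₁ h₁ j₂ h₂ h
    rw [pow_add, pow_add] at h
    have h := mul_left_cancel₀ (pow_ne_zero r h0) h
    exact hpinj (Set.mem_Iio.2 (by omega)) (Set.mem_Iio.2 (by omega)) h
  refine ⟨hdist, ?_⟩
  have hbij := aux_bij d r e ω h0 (fun s s' h => he (hpinj (helt s) (helt s') h))
  choose σ hσ using hσ
  have hex : ∀ j : Fin d, ∃ g : F → B, ∃ a : Fin d → F,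
      (∀ x, x ≠ 0 → algebraMap B F (g x) = ∑ s, a s * x ^ e s) ∧
      ∀ i : Fin d, ∑ s, a s * (ω ^ (r + (i : ℕ))) ^ e s = (Pi.single j 1 : Fin d → F) i := by
    intro j
    obtain ⟨a, ha⟩ := hbij.2 (Pi.single j 1)
    have ha' : ∀ i : Fin d, ∑ s, a s * (ω ^ (r + (i : ℕ))) ^ e s
      = (Pi.single j 1 : Fin d → F) i := fun i => congrFun ha i
    let b : Fin d → F := fun s' =>
      ∑ s ∈ Finset.univ.filter (fun s => σ s = s'), a s ^ Fintype.card B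
    have hfrob : ∀ x : F, x ≠ 0 →
        (∑ s, a s * x ^ e s) ^ Fintype.card B = ∑ s, b s * x ^ e s := by
      intro x hx
      have h1 : (∑ s, a s * x ^ e s) ^ Fintype.card B =
          ∑ s, (a s * x ^ e s) ^ Fintype.card B :=
        map_sum (FiniteField.frobeniusAlgHom B F) _ _
      rw [h1, ← Finset.sum_fiberwise Finset.univ σ]
      refine Finset.sum_congr rfl fun s' _ => ?_
      simp only [b]
      rw [Finset.sum_mul]
      refine Finset.sum_congr rfl fun s hs => ?_
      have hs' : σ s = s' := (Finset.mem_filter.1 hs).2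
      rw [mul_pow, ← pow_mul, ← hs', hσ]
      congr 1
      conv_lhs => rw [← Nat.div_add_mod (e s * Fintype.card B) (Fintype.card F - 1)]
      rw [pow_add, pow_mul, FiniteField.pow_card_sub_one_eq_one x hx, one_pow, one_mul]
    have hba : b = a := by
      apply hbij.1
      funext i
      simp only
      rw [← hfrob _ (pow_ne_zero _ h0), ha']
      by_cases hij : i = j
      · subst hij; simp
      · simp [hij, Fintype.card_ne_zero]
    rw [hba] at hfrob
    have : ∀ x : F, ∃ y : B, x ≠ 0 → algebraMap B F y = ∑ s, a s * x ^ e s := by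
      intro x
      by_cases hx : x = 0
      · exact ⟨0, fun h => absurd hx h⟩
      · obtain ⟨y, hy⟩ := aux_mem_range (B := B) _ (hfrob x hx)
        exact ⟨y, fun _ => hy⟩
    choose g hg using this
    exact ⟨g, a, hg, ha'⟩
  choose g a hg ha using hex
  refine ⟨fun j β => if h : j < d then - g ⟨j, h⟩ β else 0, ?_⟩
  intro f hf j hj
  simp only [hj, dif_pos]
  have hz := aux_sum_zero k d hk2 hk e h2 h3 (a ⟨j, hj⟩) f hf
  have hz2 : ∑ x : F, g ⟨j, hj⟩ x * Algebra.trace B F (f.eval x / x) = 0 := by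
    rw [← map_zero (Algebra.trace B F), ← hz, map_sum]
    refine Finset.sum_congr rfl fun x _ => ?_
    by_cases hx : x = 0
    · subst hx; simp
    · rw [← hg _ x hx, ← Algebra.smul_def, map_smul, smul_eq_mul]
  have hgi : ∀ i (hi : i < d), g ⟨j, hj⟩ (ω ^ (r + i)) = if i = j then 1 else 0 := by
    intro i hi
    apply (algebraMap B F).injective
    rw [hg _ _ (pow_ne_zero _ h0)]
    have := ha ⟨j, hj⟩ ⟨i, hi⟩
    simp only at this
    rw [this, Pi.single_apply]
    split_ifs with h h' h' <;> simp_all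
  rw [← Finset.sum_sdiff (Finset.subset_univ
    (insert (0 : F) ((Finset.range d).image fun j' => ω ^ (r + j')))),
    Finset.sum_insert (by simp [h0]),
    Finset.sum_image (by
      intro x hx y hy h
      exact hdist x (by simpa using hx) y (by simpa using hy) h)] at hz2
  have hs : ∑ x ∈ Finset.range d, g ⟨j, hj⟩ (ω ^ (r + x)) *
      Algebra.trace B F (f.eval (ω ^ (r + x)) / ω ^ (r + x)) =
      Algebra.trace B F (f.eval (ω ^ (r + j)) / ω ^ (r + j)) := by
    rw [Finset.sum_eq_single_of_mem j (Finset.mem_range.2 hj)]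
    · simp [hgi j hj]
    · intro i hi hij
      simp [hgi i (Finset.mem_range.1 hi), hij]
  rw [hs] at hz2
  simp only [neg_mul, Finset.sum_neg_distrib]
  simp only [div_zero, map_zero, mul_zero, zero_add] at hz2
  exact eq_neg_of_add_eq_zero_right hz2

lemma aux_coset (q t i b : ℕ) (hq : 1 ≤ q) (ht : 1 ≤ t) (hb : b ∈ cycCoset q t i) :
    cycCoset q t b = cycCoset q t i := by
  obtain ⟨j, rfl⟩ := hb
  have h1 : q ^ t ≡ 1 [MOD q ^ t - 1] :=
    ((Nat.modEq_iff_dvd' (Nat.one_le_pow _ _ hq)).2 dvd_rfl).symm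
  have hmm : ∀ l, (i * q ^ j % (q ^ t - 1)) * q ^ l ≡ i * q ^ (j + l) [MOD q ^ t - 1] := by
    intro l
    rw [pow_add, ← mul_assoc]
    exact (Nat.mod_modEq _ _).mul_right _
  ext c
  constructor
  · rintro ⟨l, rfl⟩
    exact ⟨j + l, hmm l⟩
  · rintro ⟨l, rfl⟩
    refine ⟨l + j * (t - 1), ?_⟩
    refine Nat.ModEq.symm ((hmm _).trans ?_)
    have : j + (l + j * (t - 1)) = t * j + l := by
      obtain ⟨u, rfl⟩ := Nat.exists_eq_add_of_le ht
      rw [Nat.add_sub_cancel_left]; ring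
    rw [this, pow_add, pow_mul]
    have := ((h1.pow j).mul_right (q ^ l)).mul_left i
    simpa using this

lemma aux_enum (q t k d : ℕ) (hq : 1 ≤ q) (ht : 1 ≤ t)
    (hd : d = ∑ᶠ C ∈ XiStar q t k, C.ncard) :
    ∃ e : Fin d → ℕ, Function.Injective e ∧ (∀ s, 2 ≤ e s) ∧ (∀ s, e s ≤ q ^ t - k) ∧
      ∀ s, ∃ s', e s' = e s * q % (q ^ t - 1) := by
  have hfin : (XiStar q t k).Finite :=
    (Set.finite_Icc 2 (q ^ t - k)).finite_subsets.subset (fun C hC => hC.2)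
  have hcard : (⋃ C ∈ XiStar q t k, C).ncard = d := by
    rw [hd]
    refine Set.Finite.ncard_biUnion hfin (fun C hC => (Set.finite_Icc _ _).subset hC.2) ?_
    rintro C ⟨⟨i, -, rfl⟩, -⟩ C' ⟨⟨i', -, rfl⟩, -⟩ hne
    refine Set.disjoint_left.2 fun b hb hb' => hne ?_
    rw [← aux_coset q t i b hq ht hb, ← aux_coset q t i' b hq ht hb']
  have hDf : (⋃ C ∈ XiStar q t k, C).Finite :=
    (Set.finite_Icc 2 (q ^ t - k)).subset (Set.iUnion₂_subset fun C hC => hC.2)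
  rw [Set.ncard_eq_toFinset_card _ hDf] at hcard
  let E := (hDf.toFinset.equivFinOfCardEq hcard).symm
  have hmem : ∀ s, ∃ C ∈ XiStar q t k, (E s : ℕ) ∈ C := fun s => by
    have := (E s).2
    rw [Set.Finite.mem_toFinset] at this
    simpa using this
  refine ⟨fun s => E s, fun s s' h => E.injective (Subtype.ext h), ?_, ?_, ?_⟩
  · intro s
    obtain ⟨C, hC, h⟩ := hmem s
    exact (hC.2 h).1
  · intro s
    obtain ⟨C, hC, h⟩ := hmem s
    exact (hC.2 h).2
  · intro s
    obtain ⟨C, hC, h⟩ := hmem s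
    have h' : (E s : ℕ) * q % (q ^ t - 1) ∈ C := by
      obtain ⟨⟨i, -, rfl⟩, -⟩ := hC
      rw [← aux_coset q t i _ hq ht h]
      exact ⟨1, by simp⟩
    have h'' : (E s : ℕ) * q % (q ^ t - 1) ∈ hDf.toFinset := by
      rw [Set.Finite.mem_toFinset]
      exact Set.mem_biUnion hC h'
    exact ⟨E.symm ⟨_, h''⟩, by simp⟩

theorem stmt_14 (q t k d r : ℕ) (hq : ∃ p m : ℕ, p.Prime ∧ 0 < m ∧ q = p ^ m) (ht : 1 ≤ t)
    (hk2 : 2 ≤ k) (hk : k ≤ q ^ t)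
    (hd : d = ∑ᶠ C ∈ XiStar q t k, C.ncard)
    (B F : Type) [Field B] [Fintype B] [Field F] [Fintype F] [DecidableEq F] [Algebra B F]
    (hB : Fintype.card B = q) (hrank : Module.finrank B F = t)
    (hF : Fintype.card F = q ^ t)
    (ω : F) (hω : ∀ x : F, x ≠ 0 → ∃ j : ℕ, x = ω ^ j) :
    (∀ j₁ : ℕ, j₁ < d → ∀ j₂ : ℕ, j₂ < d → ω ^ (r + j₁) = ω ^ (r + j₂) → j₁ = j₂) ∧
    ∃ M : ℕ → F → B,
      ∀ f : Polynomial F, f.degree < (k : WithBot ℕ) →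
        ∀ j : ℕ, j < d →
          Algebra.trace B F (f.eval (ω ^ (r + j)) / ω ^ (r + j)) =
            ∑ β ∈ Finset.univ \
                insert (0 : F) ((Finset.range d).image fun j' => ω ^ (r + j')),
              M j β * Algebra.trace B F (f.eval β / β) := by

  have hq1 : 1 ≤ q := hB ▸ Fintype.card_pos
  obtain ⟨e, he, h2, h3, hσ⟩ := aux_enum q t k d hq1 ht hd
  rw [← hF] at hk h3 hσ
  rw [← hB] at hσ
  exact aux_core k d r hk2 B F hk ω hω e he h2 h3 hσ
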